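/- Let ρ_ψ be any 2×2 complex matrix with entries ρ_ψ^{ij} and ρ̃_e any 4×4 complex matrix with 2×2 blocks ρ̃_{e,11}, ρ̃_{e,12}, ρ̃_{e,21}, ρ̃_{e,22}. With ρ₁ = ρ_ψ ⊗ ρ̃_e, ρ₂ = (CNOT ⊗ I₂) ρ₁ (CNOT ⊗ I₂)†, ρ₃ = (H ⊗ I₄) ρ₂ (H ⊗ I₄)†, the projection onto Alice's measurement outcome |01⟩ satisfies Π₀₁ ρ₃ Π₀₁† = |01⟩⟨01| ⊗ (1/2)·( ρ_ψ^{22}·ρ̃_{e,11} + ρ_ψ^{21}·ρ̃_{e,12} + ρ_ψ^{12}·ρ̃_{e,21} + ρ_ψ^{11}·ρ̃_{e,22} ); Bob's corrected (unnormalized) state for outcome 01 is X·( ρ_ψ^{22}ρ̃_{e,11} + ρ_ψ^{21}ρ̃_{e,12} + ρ_ψ^{12}ρ̃_{e,21} + ρ_ψ^{11}ρ̃_{e,22} )·X† up to the normalization factor 2. -/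

import Mathlib

open Matrix Kronecker Complex

noncomputable section

def PX : Matrix (Fin 2) (Fin 2) ℂ := !![0, 1; 1, 0]
def PZ : Matrix (Fin 2) (Fin 2) ℂ := !![1, 0; 0, -1]
def I2 : Matrix (Fin 2) (Fin 2) ℂ := 1

/-- Controlled-NOT gate. -/
def CNOT : Matrix (Fin 4) (Fin 4) ℂ :=
  !![1, 0, 0, 0; 0, 1, 0, 0; 0, 0, 0, 1; 0, 0, 1, 0]

/-- Hadamard gate. -/
def Hgate : Matrix (Fin 2) (Fin 2) ℂ := ((Real.sqrt 2 : ℂ))⁻¹ • !![1, 1; 1, -1]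

/-- Two-qubit standard basis vectors |ij⟩. -/
def ket2 (i j : Fin 2) : Fin 4 → ℂ := fun k => if (k : ℕ) = 2 * (i : ℕ) + (j : ℕ) then 1 else 0

/-- Kronecker product, flattened to `Fin (m*n)` indices (row-major). -/
def kron {m n : ℕ} (A : Matrix (Fin m) (Fin m) ℂ) (B : Matrix (Fin n) (Fin n) ℂ) :
    Matrix (Fin (m * n)) (Fin (m * n)) ℂ :=
  Matrix.reindex finProdFinEquiv finProdFinEquiv (A ⊗ₖ B)

/-- Projector Π_{ij} = |ij⟩⟨ij| ⊗ I₂ onto Alice's measurement outcome ij. -/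
def Pi2 (i j : Fin 2) : Matrix (Fin 8) (Fin 8) ℂ :=
  kron (vecMulVec (ket2 i j) (star (ket2 i j))) I2

/-- The 2×2 block of a 4×4 matrix in (block-)position (a,b). -/
def blk (ρ : Matrix (Fin 4) (Fin 4) ℂ) (a b : Fin 2) : Matrix (Fin 2) (Fin 2) ℂ :=
  Matrix.of fun i j =>
    ρ ⟨2 * (a : ℕ) + (i : ℕ), by have := a.isLt; have := i.isLt; omega⟩
      ⟨2 * (b : ℕ) + (j : ℕ), by have := b.isLt; have := j.isLt; omega⟩

/-- Global state after Alice's CNOT and Hadamard gates in the teleportation circuit. -/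
def rho3 (ρψ : Matrix (Fin 2) (Fin 2) ℂ) (ρe : Matrix (Fin 4) (Fin 4) ℂ) :
    Matrix (Fin 8) (Fin 8) ℂ :=
  kron Hgate (1 : Matrix (Fin 4) (Fin 4) ℂ) *
    (kron CNOT I2 * kron ρψ ρe * (kron CNOT I2)ᴴ) *
    (kron Hgate (1 : Matrix (Fin 4) (Fin 4) ℂ))ᴴ

/-! The adjoint of Alice's circuit sends `|ij⟩` to a vector of the Bell basis, so the outcome `ij`
leaves Bob with the contraction of `ρψ ⊗ ρe` against `(1/√2) ∑ₐ (-1)^(i a) |a, a + j⟩`. Expanding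
it sesquilinearly reduces to contractions against standard basis vectors, and these read off an
entry of `ρψ` times a block of `ρe`. -/

section Kron

variable {l m n : ℕ}

lemma finProdFinEquiv_assoc (a : Fin l) (b : Fin m) (c : Fin n) :
    (finProdFinEquiv (finProdFinEquiv (a, b), c)).cast (mul_assoc l m n) =
      finProdFinEquiv (a, finProdFinEquiv (b, c)) :=
  Fin.ext <| by simp; ring

lemma kron_finProdFinEquiv (A : Matrix (Fin m) (Fin m) ℂ) (B : Matrix (Fin n) (Fin n) ℂ)
    (i j : Fin m) (s t : Fin n) :
    kron A B (finProdFinEquiv (i, s)) (finProdFinEquiv (j, t)) = A i j * B s t := by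
  rw [kron, reindex_apply, submatrix_apply, Equiv.symm_apply_apply, Equiv.symm_apply_apply,
    kronecker_apply]

lemma kron_one_one : kron (1 : Matrix (Fin m) (Fin m) ℂ) (1 : Matrix (Fin n) (Fin n) ℂ) = 1 := by
  simp [kron]

lemma kron_mul_kron (A C : Matrix (Fin m) (Fin m) ℂ) (B D : Matrix (Fin n) (Fin n) ℂ) :
    kron A B * kron C D = kron (A * C) (B * D) := by
  simp [kron, mul_kronecker_mul, submatrix_mul_equiv]

lemma conjTranspose_kron (A : Matrix (Fin m) (Fin m) ℂ) (B : Matrix (Fin n) (Fin n) ℂ) :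
    (kron A B)ᴴ = kron Aᴴ Bᴴ := by
  simp [kron, conjTranspose_kronecker]

lemma kron_assoc (A : Matrix (Fin l) (Fin l) ℂ) (B : Matrix (Fin m) (Fin m) ℂ)
    (C : Matrix (Fin n) (Fin n) ℂ) :
    kron (kron A B) C = (kron A (kron B C)).submatrix
      (Fin.cast (mul_assoc l m n)) (Fin.cast (mul_assoc l m n)) := by
  ext p q
  obtain ⟨⟨p', k⟩, rfl⟩ := finProdFinEquiv.surjective p
  obtain ⟨⟨i, j⟩, rfl⟩ := finProdFinEquiv.surjective p'
  obtain ⟨⟨q', k'⟩, rfl⟩ := finProdFinEquiv.surjective q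
  obtain ⟨⟨i', j'⟩, rfl⟩ := finProdFinEquiv.surjective q'
  simp only [submatrix_apply, finProdFinEquiv_assoc, kron_finProdFinEquiv, mul_assoc]

lemma kron_one_mulVec_single (A : Matrix (Fin m) (Fin m) ℂ) (i : Fin m) (s : Fin n) :
    kron A (1 : Matrix (Fin n) (Fin n) ℂ) *ᵥ Pi.single (finProdFinEquiv (i, s)) 1 =
      ∑ a, A a i • Pi.single (finProdFinEquiv (a, s)) 1 := by
  ext p
  obtain ⟨⟨b, t⟩, rfl⟩ := finProdFinEquiv.surjective p
  simp [kron_finProdFinEquiv, one_apply, Pi.single_apply, ite_and]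

end Kron

section KetTensor

variable {m n : ℕ}

/-- The operator `|v⟩ ⊗ Iₙ`, which adjoins a register in state `v` to the left of an
`n`-dimensional system; its adjoint contracts that register with `⟨v|`. -/
def ketTensor (n : ℕ) : (Fin m → ℂ) →ₗ[ℂ] Matrix (Fin (m * n)) (Fin n) ℂ where
  toFun v := of fun p t =>
    v (finProdFinEquiv.symm p).1 * (1 : Matrix (Fin n) (Fin n) ℂ) (finProdFinEquiv.symm p).2 t
  map_add' v w := by ext; simp [add_mul]
  map_smul' c v := by ext; simp [mul_assoc]

lemma ketTensor_finProdFinEquiv (v : Fin m → ℂ) (i : Fin m) (s t : Fin n) :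
    ketTensor n v (finProdFinEquiv (i, s)) t = v i * (1 : Matrix (Fin n) (Fin n) ℂ) s t :=
  congrArg (fun q : Fin m × Fin n => v q.1 * (1 : Matrix (Fin n) (Fin n) ℂ) q.2 t)
    (finProdFinEquiv.symm_apply_apply (i, s))

lemma ketTensor_mul_mul_conjTranspose (u v : Fin m → ℂ) (σ : Matrix (Fin n) (Fin n) ℂ) :
    ketTensor n u * σ * (ketTensor n v)ᴴ = kron (vecMulVec u (star v)) σ := by
  ext p q
  obtain ⟨⟨i, s⟩, rfl⟩ := finProdFinEquiv.surjective p
  obtain ⟨⟨j, t⟩, rfl⟩ := finProdFinEquiv.surjective q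
  simp [mul_apply, ketTensor_finProdFinEquiv, kron_finProdFinEquiv, vecMulVec_apply, one_apply,
    apply_ite, mul_right_comm]

lemma kron_one_mul_ketTensor (M : Matrix (Fin m) (Fin m) ℂ) (v : Fin m → ℂ) :
    kron M (1 : Matrix (Fin n) (Fin n) ℂ) * ketTensor n v = ketTensor n (M *ᵥ v) := by
  ext p t
  obtain ⟨⟨i, s⟩, rfl⟩ := finProdFinEquiv.surjective p
  simp only [mul_apply, ← finProdFinEquiv.sum_comp, Fintype.sum_prod_type, kron_finProdFinEquiv,
    ketTensor_finProdFinEquiv, mulVec, dotProduct]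
  simp [one_apply]

lemma ketTensor_single (k : Fin m) :
    ketTensor n (Pi.single k 1) =
      (1 : Matrix (Fin (m * n)) (Fin (m * n)) ℂ).submatrix id fun t => finProdFinEquiv (k, t) := by
  ext p t
  obtain ⟨⟨i, s⟩, rfl⟩ := finProdFinEquiv.surjective p
  simp [ketTensor_finProdFinEquiv, Pi.single_apply, one_apply, ← ite_and, and_comm]

lemma conjTranspose_ketTensor_single_mul_mul (ρ : Matrix (Fin (m * n)) (Fin (m * n)) ℂ)
    (k l : Fin m) :
    (ketTensor n (Pi.single k 1))ᴴ * ρ * ketTensor n (Pi.single l 1) =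
      ρ.submatrix (fun s => finProdFinEquiv (k, s)) fun t => finProdFinEquiv (l, t) := by
  ext s t
  simp [ketTensor_single, mul_apply, one_apply]

/-- Projecting onto `u` after the gate `V` amounts to contracting with `V† u` before it. -/
lemma kron_projector_mul_conj_kron_gate (u : Fin m → ℂ) (V : Matrix (Fin m) (Fin m) ℂ)
    (ρ : Matrix (Fin (m * n)) (Fin (m * n)) ℂ) :
    kron (vecMulVec u (star u)) 1 * (kron V 1 * ρ * (kron V 1)ᴴ) *
        (kron (vecMulVec u (star u)) (1 : Matrix (Fin n) (Fin n) ℂ))ᴴ =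
      kron (vecMulVec u (star u))
        ((ketTensor n (Vᴴ *ᵥ u))ᴴ * ρ * ketTensor n (Vᴴ *ᵥ u)) := by
  have adjoint_gate : (kron V (1 : Matrix (Fin n) (Fin n) ℂ))ᴴ = kron Vᴴ 1 := by
    rw [conjTranspose_kron, conjTranspose_one]
  have projector_eq : kron (vecMulVec u (star u)) (1 : Matrix (Fin n) (Fin n) ℂ) =
      ketTensor n u * (ketTensor n u)ᴴ := by
    rw [← ketTensor_mul_mul_conjTranspose, Matrix.mul_one]
  rw [← kron_one_mul_ketTensor, ← adjoint_gate, projector_eq, ← ketTensor_mul_mul_conjTranspose]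
  simp only [conjTranspose_mul, conjTranspose_conjTranspose, Matrix.mul_assoc]

end KetTensor

section Circuit

lemma ket2_eq_single (i j : Fin 2) : ket2 i j = Pi.single (finProdFinEquiv (i, j)) 1 := by
  ext k
  simp [ket2, Pi.single_apply, Fin.ext_iff, finProdFinEquiv, add_comm]

lemma blk_eq_submatrix (ρ : Matrix (Fin 4) (Fin 4) ℂ) (a b : Fin 2) :
    blk ρ a b =
      ρ.submatrix (fun s : Fin 2 => finProdFinEquiv (a, s)) fun t : Fin 2 =>
        finProdFinEquiv (b, t) := by
  ext s t
  simp [blk, finProdFinEquiv, add_comm]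

lemma CNOT_conjTranspose_mulVec_ket2 (a j : Fin 2) : CNOTᴴ *ᵥ ket2 a j = ket2 a (a + j) := by
  ext k
  fin_cases a <;> fin_cases j <;> fin_cases k <;>
    simp [CNOT, ket2, mulVec, dotProduct, Fin.sum_univ_four]

lemma Hgate_apply (i a : Fin 2) : Hgate i a = (Real.sqrt 2 : ℂ)⁻¹ * (-1) ^ (i * a : ℕ) := by
  fin_cases i <;> fin_cases a <;> simp [Hgate]

/-- The gate `H ⊗ I₂`: a Hadamard on the first of Alice's two qubits. -/
def hadamardFst : Matrix (Fin 4) (Fin 4) ℂ := kron Hgate (1 : Matrix (Fin 2) (Fin 2) ℂ)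

lemma hadamardFst_conjTranspose_mulVec_ket2 (i j : Fin 2) :
    hadamardFstᴴ *ᵥ ket2 i j =
      (Real.sqrt 2 : ℂ)⁻¹ • ∑ a : Fin 2, (-1 : ℂ) ^ (i * a : ℕ) • ket2 a j := by
  have adjoint_eq : hadamardFstᴴ = kron Hgateᴴ (1 : Matrix (Fin 2) (Fin 2) ℂ) :=
    (conjTranspose_kron _ _).trans (by rw [conjTranspose_one])
  simp_rw [adjoint_eq, ket2_eq_single, Finset.smul_sum, smul_smul]
  refine (kron_one_mulVec_single Hgateᴴ i j).trans ?_
  simp [Hgate_apply]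

/-- The vector `(1/√2) ∑ₐ (-1)^(i a) |a, a + j⟩` of the Bell basis. Alice's circuit followed by
a measurement of `|ij⟩` is a measurement of this vector. -/
def bellKet (i j : Fin 2) : Fin 4 → ℂ :=
  (Real.sqrt 2 : ℂ)⁻¹ • ∑ a : Fin 2, (-1 : ℂ) ^ (i * a : ℕ) • ket2 a (a + j)

lemma hadamardFst_mul_CNOT_conjTranspose_mulVec_ket2 (i j : Fin 2) :
    (hadamardFst * CNOT)ᴴ *ᵥ ket2 i j = bellKet i j := by
  rw [conjTranspose_mul, ← mulVec_mulVec, hadamardFst_conjTranspose_mulVec_ket2, mulVec_smul,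
    mulVec_sum]
  simp only [mulVec_smul, CNOT_conjTranspose_mulVec_ket2, bellKet]

lemma kron_hadamardFst_I2 : kron hadamardFst I2 = kron Hgate (1 : Matrix (Fin 4) (Fin 4) ℂ) := by
  rw [← kron_one_one (m := 2) (n := 2)]
  exact kron_assoc Hgate 1 1

lemma rho3_eq_conj_kron (ρψ : Matrix (Fin 2) (Fin 2) ℂ) (ρe : Matrix (Fin 4) (Fin 4) ℂ) :
    rho3 ρψ ρe = kron (hadamardFst * CNOT) I2 * kron (m := 2) (n := 4) ρψ ρe *
      (kron (hadamardFst * CNOT) I2)ᴴ := by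
  have gates_eq : kron (hadamardFst * CNOT) I2 = kron hadamardFst I2 * kron CNOT I2 := by
    rw [kron_mul_kron, I2, one_mul]
  rw [gates_eq, kron_hadamardFst_I2]
  simp only [rho3, conjTranspose_mul, Matrix.mul_assoc]

lemma ketTensor_ket2_conjTranspose_mul_kron_mul (ρψ : Matrix (Fin 2) (Fin 2) ℂ)
    (ρe : Matrix (Fin 4) (Fin 4) ℂ) (a b c d : Fin 2) :
    (ketTensor 2 (ket2 a c))ᴴ * kron (m := 2) (n := 4) ρψ ρe * ketTensor 2 (ket2 b d) =
      ρψ a b • blk ρe c d := by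
  rw [ket2_eq_single, ket2_eq_single, blk_eq_submatrix]
  refine (conjTranspose_ketTensor_single_mul_mul _ _ _).trans ?_
  ext s t
  -- The casts in `finProdFinEquiv_assoc` are definitionally trivial on these numeral dimensions.
  exact (congrArg₂ (kron (m := 2) (n := 4) ρψ ρe) (finProdFinEquiv_assoc a c s)
    (finProdFinEquiv_assoc b d t)).trans (kron_finProdFinEquiv _ _ _ _ _ _)

lemma ketTensor_bellKet_conjTranspose_mul_mul {n : ℕ}
    (ρ : Matrix (Fin (4 * n)) (Fin (4 * n)) ℂ) (i j : Fin 2) :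
    (ketTensor n (bellKet i j))ᴴ * ρ * ketTensor n (bellKet i j) =
      (2 : ℂ)⁻¹ • ∑ a : Fin 2, ∑ b : Fin 2, (-1 : ℂ) ^ (i * (a + b) : ℕ) •
        ((ketTensor n (ket2 a (a + j)))ᴴ * ρ * ketTensor n (ket2 b (b + j))) := by
  have inv_sqrt_two_mul_self : (Real.sqrt 2 : ℂ)⁻¹ * (Real.sqrt 2 : ℂ)⁻¹ = 2⁻¹ := by
    rw [← mul_inv, ← ofReal_mul, Real.mul_self_sqrt zero_le_two, ofReal_ofNat]
  have star_coeff (a : Fin 2) : star ((Real.sqrt 2 : ℂ)⁻¹ * (-1) ^ (i * a : ℕ)) =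
      (Real.sqrt 2 : ℂ)⁻¹ * (-1) ^ (i * a : ℕ) := by
    simp
  simp only [bellKet, map_smul, map_sum, conjTranspose_smul, conjTranspose_sum, Matrix.smul_mul,
    Matrix.mul_smul, Matrix.sum_mul, Matrix.mul_sum, Finset.smul_sum, smul_smul, star_coeff,
    ← inv_sqrt_two_mul_self]
  rw [Finset.sum_comm]
  refine Finset.sum_congr rfl fun a _ => Finset.sum_congr rfl fun b _ => ?_
  congr 1
  ring

end Circuit

theorem teleportation_outcome_01_general (ρψ : Matrix (Fin 2) (Fin 2) ℂ)
    (ρe : Matrix (Fin 4) (Fin 4) ℂ) (i j : Fin 2) :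
    Pi2 i j * rho3 ρψ ρe * (Pi2 i j)ᴴ =
      kron (vecMulVec (ket2 i j) (star (ket2 i j)))
        ((2 : ℂ)⁻¹ • ∑ a : Fin 2, ∑ b : Fin 2,
          (-1 : ℂ) ^ (i * (a + b) : ℕ) • ρψ a b • blk ρe (a + j) (b + j)) := by
  simp_rw [← ketTensor_ket2_conjTranspose_mul_kron_mul]
  rw [rho3_eq_conj_kron, ← ketTensor_bellKet_conjTranspose_mul_mul,
    ← hadamardFst_mul_CNOT_conjTranspose_mulVec_ket2]
  exact kron_projector_mul_conj_kron_gate _ _ _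

theorem teleportation_outcome_01 (ρψ : Matrix (Fin 2) (Fin 2) ℂ)
    (ρe : Matrix (Fin 4) (Fin 4) ℂ) :
    Pi2 0 1 * rho3 ρψ ρe * (Pi2 0 1)ᴴ =
      kron (vecMulVec (ket2 0 1) (star (ket2 0 1)))
        (((2 : ℂ))⁻¹ • (ρψ 1 1 • blk ρe 0 0 + ρψ 1 0 • blk ρe 0 1
          + ρψ 0 1 • blk ρe 1 0 + ρψ 0 0 • blk ρe 1 1)) := by
  rw [teleportation_outcome_01_general]
  congr 2
  simp [Fin.sum_univ_two]
  abel

end
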